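/- Assume the pairs (𝓡₁, 𝓡₂) and (𝓡₁*, 𝓡₂*) are incommensurate, fix j ∈ {1,2}, and let h ∈ L¹_loc(ℝ⁴) be 𝓡_𝓜 × 𝓡_{3−j}-periodic. Then the ergodic averages 𝒜_N(h)(ω_𝓜, ω_{3−j}) := (2N+1)^{−2} Σ_{R_j ∈ 𝓡_j(N)} h(ω_𝓜 + R_j, ω_{3−j} + R_j) converge, as N → ∞, for Lebesgue-almost all (ω_𝓜, ω_{3−j}) ∈ Γ_𝓜 × Γ_{3−j} and also in L¹(Γ_𝓜 × Γ_{3−j}), to ⨍_{A_j^{−1}Γ_𝓜} h(A_j ξ + ω_𝓜, (A_j − A_{3−j}) ξ + ω_{3−j}) dξ, which equals ⨍_{Γ_𝓜} h(x, D_{j→3−j}(x − ω_𝓜) + ω_{3−j}) dx and ⨍_{Γ_{3−j}} h(D_{j→3−j}^{−1}(y − ω_{3−j}) + ω_𝓜, y) dy. -/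

import Mathlib

open scoped Real BigOperators
open MeasureTheory Filter Topology Matrix

noncomputable section

/-- The 2×2 rotation matrix through angle `φ`. -/
def Rot (φ : ℝ) : Matrix (Fin 2) (Fin 2) ℝ :=
  !![Real.cos φ, -Real.sin φ; Real.sin φ, Real.cos φ]

/-- Euclidean norm on `ℝ²`. -/
def norm2 (v : Fin 2 → ℝ) : ℝ := Real.sqrt (v 0 ^ 2 + v 1 ^ 2)

/-- Euclidean norm on `ℝ³`. -/
def norm3 (v : Fin 3 → ℝ) : ℝ := Real.sqrt (v 0 ^ 2 + v 1 ^ 2 + v 2 ^ 2)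

/-- Cast an integer vector to a real vector. -/
def iv (n : Fin 2 → ℤ) : Fin 2 → ℝ := fun i => (n i : ℝ)

/-- The lattice `M ℤ²`. -/
def lat (M : Matrix (Fin 2) (Fin 2) ℝ) : Set (Fin 2 → ℝ) :=
  {v | ∃ n : Fin 2 → ℤ, v = M.mulVec (iv n)}

/-- The unit cell `M [0,1)²`. -/
def cell (M : Matrix (Fin 2) (Fin 2) ℝ) : Set (Fin 2 → ℝ) :=
  {v | ∃ t : Fin 2 → ℝ, (∀ i, t i ∈ Set.Ico (0 : ℝ) 1) ∧ v = M.mulVec t}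

/-- The reciprocal matrix `2π M⁻ᵀ`. -/
def recip (M : Matrix (Fin 2) (Fin 2) ℝ) : Matrix (Fin 2) (Fin 2) ℝ :=
  (2 * π) • (M⁻¹)ᵀ

/-- A pair of lattices with reciprocal-lattice matrices `B1`, `B2` is incommensurate iff
`G₁ + G₂ = 0` with `G_k` in the respective reciprocal lattice implies `G₁ = G₂ = 0`. -/
def Incommensurate (B1 B2 : Matrix (Fin 2) (Fin 2) ℝ) : Prop :=
  ∀ G1 ∈ lat B1, ∀ G2 ∈ lat B2, G1 + G2 = 0 → G1 = 0 ∧ G2 = 0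

/-- Euclidean distance from `v ∈ ℝ²` to the integer lattice `ℤ²`. -/
def distZ2 (v : Fin 2 → ℝ) : ℝ := ⨅ m : Fin 2 → ℤ, norm2 (v - iv m)

/-- `θ` is a `(q,K,σ)`-Diophantine 2D rotation. -/
def IsDiophantine (A : Matrix (Fin 2) (Fin 2) ℝ) (q K σ θ : ℝ) : Prop :=
  ∀ n : Fin 2 → ℤ, n ≠ 0 →
    K / norm2 (iv n) ^ (2 * σ) ≤ distZ2 ((q • (Aᵀ * Rot θ * (A⁻¹)ᵀ)).mulVec (iv n)) ∧
    K / norm2 (iv n) ^ (2 * σ) ≤ distZ2 ((q⁻¹ • (Aᵀ * Rot (-θ) * (A⁻¹)ᵀ)).mulVec (iv n))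

/-- The moiré length scale ratio `ρ_𝓜`. -/
def rhoM (q θ : ℝ) : ℝ :=
  (Real.sqrt ((Real.sqrt q - (Real.sqrt q)⁻¹) ^ 2 + 4 * Real.sin (θ / 2) ^ 2))⁻¹

/-- Riemann zeta function (for real `s > 1`, via its Dirichlet series). -/
def zetaR (s : ℝ) : ℝ := ∑' n : ℕ, ((n : ℝ) + 1) ^ (-s)

/-- Operator (spectral) norm of a 2×2 real matrix w.r.t. the Euclidean norm. -/
def opNorm2 (M : Matrix (Fin 2) (Fin 2) ℝ) : ℝ :=
  ⨆ x : {x : Fin 2 → ℝ // norm2 x ≤ 1}, norm2 (M.mulVec x.1)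

/-- Embedding `ℝ² ↪ ℝ³`, `x ↦ (x, 0)`. -/
def emb (x : Fin 2 → ℝ) : Fin 3 → ℝ := ![x 0, x 1, 0]

/-- Japanese bracket `⟨x⟩ = (1 + |x|²)^{1/2}` on `ℝ³`. -/
def jap3 (x : Fin 3 → ℝ) : ℝ := Real.sqrt (1 + norm3 x ^ 2)

/-- The region `ℝ² × [−L, L] ⊆ ℝ³`. -/
def slab (L : ℝ) : Set (Fin 3 → ℝ) := {x | x 2 ∈ Set.Icc (-L) L}

/-- Euclidean inner product on `ℝ²`. -/
def dot2 (a b : Fin 2 → ℝ) : ℝ := ∑ i, a i * b i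

/-- The index box `⟦−N, N⟧²`. -/
def box (N : ℕ) : Finset (Fin 2 → ℤ) :=
  Finset.Icc (fun _ => -(N : ℤ)) (fun _ => (N : ℤ))

/-- The normalized Dirichlet kernel `Δ_N^j` of the lattice `A_j ℤ²`. -/
def Dir (Aj : Matrix (Fin 2) (Fin 2) ℝ) (N : ℕ) (G : Fin 2 → ℝ) : ℂ :=
  (((2 * N + 1 : ℝ)) ^ 2)⁻¹ •
    ∑ n ∈ box N, Complex.exp (Complex.I * (dot2 G (Aj.mulVec (iv n)) : ℝ))

lemma mem_box_iff (N : ℕ) (n : Fin 2 → ℤ) : n ∈ box N ↔ ∀ i, -(N : ℤ) ≤ n i ∧ n i ≤ N := by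
  simp only [box, Finset.mem_Icc, Pi.le_def]
  exact ⟨fun h i => ⟨h.1 i, h.2 i⟩, fun h => ⟨fun i => (h i).1, fun i => (h i).2⟩⟩

lemma box_eq_pi (N : ℕ) : box N = Fintype.piFinset (fun _ : Fin 2 => Finset.Icc (-(N : ℤ)) N) := by
  ext n
  simp [mem_box_iff, Fintype.mem_piFinset]

lemma card_box (N : ℕ) : (box N).card = (2 * N + 1) ^ 2 := by
  rw [box_eq_pi, Fintype.card_piFinset]
  simp only [Int.card_Icc, Finset.prod_const, Finset.card_univ, Fintype.card_fin]
  congr 1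
  omega

lemma mem_closedBall_iff (a n : Fin 2 → ℤ) (N : ℕ) :
    n ∈ Metric.closedBall a (N : ℝ) ↔ n - a ∈ box N := by
  rw [Metric.mem_closedBall, dist_pi_le_iff (by positivity), mem_box_iff]
  refine forall_congr' fun i => ?_
  rw [Int.dist_eq, Pi.sub_apply, ← abs_le, ← Int.cast_sub, ← Int.cast_abs]
  exact_mod_cast Iff.rfl

/-- Discrete weak type maximal inequality on `ℤ²`. -/
lemma discrete_maximal (f : (Fin 2 → ℤ) → ENNReal) (lam : ENNReal) (S K : Finset (Fin 2 → ℤ))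
    (r : (Fin 2 → ℤ) → ℕ)
    (hr : ∀ a ∈ S, lam * ((2 * r a + 1 : ℕ) ^ 2 : ENNReal) ≤ ∑ n ∈ box (r a), f (a + n))
    (hK : ∀ a ∈ S, ∀ n ∈ box (r a), a + n ∈ K) :
    lam * (S.card : ENNReal) ≤ 25 * ∑ n ∈ K, f n := by
  classical
  obtain ⟨u, huS, hdisj, hcov⟩ := Vitali.exists_disjoint_subfamily_covering_enlargement_closedBall
    (S : Set (Fin 2 → ℤ)) (fun a => a) (fun a => (r a : ℝ)) (∑ a ∈ S, (r a : ℝ))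
    (fun a ha => Finset.single_le_sum (f := fun a => (r a : ℝ)) (fun _ _ => by positivity) ha)
    5 (by norm_num)
  have hufin : u.Finite := S.finite_toSet.subset huS
  lift u to Finset (Fin 2 → ℤ) using hufin
  have hsub : S ⊆ u.biUnion (fun b => (box (5 * r b)).image (fun n => b + n)) := by
    intro a ha
    obtain ⟨b, hb, hab⟩ := hcov a ha
    have : a ∈ Metric.closedBall b ((5 * r b : ℕ) : ℝ) := by
      push_cast
      exact hab (Metric.mem_closedBall_self (by positivity))
    rw [mem_closedBall_iff] at this
    rw [Finset.mem_biUnion]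
    exact ⟨b, hb, Finset.mem_image.2 ⟨_, this, by abel⟩⟩
  have hcard : S.card ≤ ∑ b ∈ u, 25 * (2 * r b + 1) ^ 2 := by
    refine (Finset.card_le_card hsub).trans (Finset.card_biUnion_le.trans ?_)
    refine Finset.sum_le_sum fun b _ => Finset.card_image_le.trans ?_
    rw [card_box]
    calc (2 * (5 * r b) + 1) ^ 2 ≤ (5 * (2 * r b + 1)) ^ 2 := Nat.pow_le_pow_left (by omega) 2
      _ = _ := by ring
  have hbi : ∑ b ∈ u, ∑ n ∈ box (r b), f (b + n) ≤ ∑ n ∈ K, f n := by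
    have h1 : ∀ b, ∑ n ∈ box (r b), f (b + n) = ∑ n ∈ (box (r b)).image (fun n => b + n), f n := by
      intro b
      rw [Finset.sum_image]
      intro x _ y _ h
      exact add_left_cancel h
    simp_rw [h1]
    rw [← Finset.sum_biUnion]
    · refine Finset.sum_le_sum_of_subset ?_
      intro n hn
      rw [Finset.mem_biUnion] at hn
      obtain ⟨b, hb, hn⟩ := hn
      obtain ⟨m, hm, rfl⟩ := Finset.mem_image.1 hn
      exact hK b (huS hb) m hm
    · intro b hb b' hb' hne
      rw [Function.onFun, Finset.disjoint_left]
      intro x hx hx'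
      have key : ∀ b, x ∈ (box (r b)).image (fun n => b + n) →
          x ∈ Metric.closedBall b (r b : ℝ) := by
        intro b hx
        obtain ⟨m, hm, rfl⟩ := Finset.mem_image.1 hx
        rw [mem_closedBall_iff]
        simpa using hm
      exact Set.disjoint_left.1 (hdisj hb hb' hne) (key b hx) (key b' hx')
  calc lam * (S.card : ENNReal) ≤ lam * ((∑ b ∈ u, 25 * (2 * r b + 1) ^ 2 : ℕ) : ENNReal) := by
        gcongr
    _ = 25 * ∑ b ∈ u, lam * ((2 * r b + 1 : ℕ) ^ 2 : ENNReal) := by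
        push_cast
        rw [Finset.mul_sum, Finset.mul_sum]
        refine Finset.sum_congr rfl fun b _ => by ring
    _ ≤ 25 * ∑ b ∈ u, ∑ n ∈ box (r b), f (b + n) := by
        gcongr with b hb
        exact_mod_cast hr b (huS hb)
    _ ≤ _ := by gcongr

/-- Weak type maximal inequality, truncated. -/
lemma maximal_trunc {X : Type*} [MeasurableSpace X] (μ : Measure X)
    (T : (Fin 2 → ℤ) → X → X) (hT : ∀ n, MeasurePreserving (T n) μ μ)
    (hadd : ∀ n m x, T n (T m x) = T (m + n) x)
    (φ : X → ENNReal) (hφ : Measurable φ) (lam : ENNReal) (M : ℕ) :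
    lam * μ {x | ∃ N ≤ M, lam * ((2 * N + 1 : ℕ) ^ 2 : ENNReal) ≤ ∑ n ∈ box N, φ (T n x)}
      ≤ 100 * ∫⁻ x, φ x ∂μ := by
  classical
  set E := {x | ∃ N ≤ M, lam * ((2 * N + 1 : ℕ) ^ 2 : ENNReal) ≤ ∑ n ∈ box N, φ (T n x)} with hE
  have hEm : MeasurableSet E := by
    have : E = ⋃ N ∈ Set.Iic M,
        {x | lam * ((2 * N + 1 : ℕ) ^ 2 : ENNReal) ≤ ∑ n ∈ box N, φ (T n x)} := by
      ext x; simp [hE]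
    rw [this]
    refine MeasurableSet.biUnion (Set.finite_Iic M).countable fun N _ => ?_
    refine measurableSet_le measurable_const ?_
    exact Finset.measurable_sum _ fun n _ => hφ.comp (hT n).measurable
  have hpt : ∀ x, lam * ∑ n ∈ box M, E.indicator 1 (T n x) ≤
      25 * ∑ n ∈ box (2 * M), φ (T n x) := by
    intro x
    have h1 : ∑ n ∈ box M, E.indicator (1 : X → ENNReal) (T n x)
        = (((box M).filter (fun n => T n x ∈ E)).card : ENNReal) := by
      rw [Finset.card_filter]
      push_cast
      simp [Set.indicator_apply]
    rw [h1]
    have hch : ∀ n : Fin 2 → ℤ, ∃ N : ℕ, T n x ∈ E → N ≤ M ∧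
        lam * ((2 * N + 1 : ℕ) ^ 2 : ENNReal) ≤ ∑ m ∈ box N, φ (T m (T n x)) := by
      intro n
      by_cases h : T n x ∈ E
      · obtain ⟨N, hN⟩ := h
        exact ⟨N, fun _ => hN⟩
      · exact ⟨0, fun h' => absurd h' h⟩
    choose r hr using hch
    refine discrete_maximal (fun n => φ (T n x)) lam _ _ r ?_ ?_
    · intro a ha
      have := (hr a (Finset.mem_filter.1 ha).2).2
      simpa only [hadd] using this
    · intro a ha n hn
      have h2 := (hr a (Finset.mem_filter.1 ha).2).1
      have h3 := (Finset.mem_filter.1 ha).1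
      rw [mem_box_iff] at *
      intro i
      have := h3 i
      have := hn i
      simp only [Pi.add_apply]
      push_cast
      constructor <;> omega
  have hintg := lintegral_mono (μ := μ) hpt
  have hc1 : ∀ n, Measurable fun x => E.indicator (1 : X → ENNReal) (T n x) :=
    fun n => (measurable_one.indicator hEm).comp (hT n).measurable
  have hc2 : ∀ n, Measurable fun x => φ (T n x) := fun n => hφ.comp (hT n).measurable
  have hindm : Measurable (E.indicator (1 : X → ENNReal)) := measurable_one.indicator hEm
  rw [lintegral_const_mul _ (Finset.measurable_fun_sum _ fun n _ => hc1 n),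
    lintegral_const_mul _ (Finset.measurable_fun_sum _ fun n _ => hc2 n),
    lintegral_finsetSum _ (fun n _ => hc1 n),
    lintegral_finsetSum _ (fun n _ => hc2 n)] at hintg
  simp_rw [fun n => (hT n).lintegral_comp hindm, fun n => (hT n).lintegral_comp hφ] at hintg
  rw [lintegral_indicator_one hEm] at hintg
  simp only [Finset.sum_const, card_box, nsmul_eq_mul] at hintg
  have hpos : (((2 * M + 1) ^ 2 : ℕ) : ENNReal) ≠ 0 := by
    exact_mod_cast (by positivity : (2 * M + 1) ^ 2 ≠ 0)
  have htop : (((2 * M + 1) ^ 2 : ℕ) : ENNReal) ≠ ⊤ := ENNReal.natCast_ne_top _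
  rw [← ENNReal.mul_le_mul_iff_right hpos htop]
  calc _ = lam * (((2 * M + 1) ^ 2 : ℕ) * μ E) := by ring
    _ ≤ _ := hintg
    _ ≤ 25 * (((4 * (2 * M + 1) ^ 2 : ℕ) : ENNReal) * ∫⁻ x, φ x ∂μ) := by
        gcongr
        calc (2 * (2 * M) + 1) ^ 2 ≤ (2 * (2 * M + 1)) ^ 2 := Nat.pow_le_pow_left (by omega) 2
          _ = _ := by ring
    _ = _ := by push_cast; ring

lemma maximal_full {X : Type*} [MeasurableSpace X] (μ : Measure X)
    (T : (Fin 2 → ℤ) → X → X) (hT : ∀ n, MeasurePreserving (T n) μ μ)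
    (hadd : ∀ n m x, T n (T m x) = T (m + n) x)
    (φ : X → ENNReal) (hφ : AEMeasurable φ μ) (lam : ENNReal) :
    lam * μ {x | ∃ N : ℕ, lam * ((2 * N + 1 : ℕ) ^ 2 : ENNReal) ≤ ∑ n ∈ box N, φ (T n x)}
      ≤ 100 * ∫⁻ x, φ x ∂μ := by
  have hae : ∀ᵐ x ∂μ, ∀ n, φ (T n x) = hφ.mk φ (T n x) :=
    ae_all_iff.2 fun n => (hT n).quasiMeasurePreserving.ae hφ.ae_eq_mk
  have h1 : μ {x | ∃ N : ℕ, lam * ((2 * N + 1 : ℕ) ^ 2 : ENNReal) ≤ ∑ n ∈ box N, φ (T n x)} ≤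
      μ (⋃ M : ℕ, {x | ∃ N ≤ M, lam * ((2 * N + 1 : ℕ) ^ 2 : ENNReal) ≤
        ∑ n ∈ box N, hφ.mk φ (T n x)}) := by
    refine measure_mono_ae ?_
    filter_upwards [hae] with x hx
    rintro ⟨N, hN⟩
    refine Set.mem_iUnion.2 ⟨N, N, le_rfl, ?_⟩
    simpa only [hx] using hN
  rw [lintegral_congr_ae hφ.ae_eq_mk]
  refine (mul_le_mul_right h1 lam).trans ?_
  rw [Monotone.measure_iUnion, ENNReal.mul_iSup]
  · exact iSup_le fun M => maximal_trunc μ T hT hadd _ hφ.measurable_mk lam M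
  · intro M M' hM x
    rintro ⟨N, hN, h⟩
    exact ⟨N, hN.trans hM, h⟩

/-- Box averages along an action of `ℤ²`. -/
def bavg {X : Type*} (T : (Fin 2 → ℤ) → X → X) (F : X → ℂ) (N : ℕ) (x : X) : ℂ :=
  ((2 * N + 1 : ℝ) ^ 2)⁻¹ • ∑ n ∈ box N, F (T n x)

lemma enorm_bavg_const (N : ℕ) :
    ‖((2 * N + 1 : ℝ) ^ 2)⁻¹‖ₑ = ((2 * N + 1 : ℕ) ^ 2 : ENNReal)⁻¹ := by
  rw [Real.enorm_of_nonneg (by positivity), ENNReal.ofReal_inv_of_pos (by positivity)]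
  congr 1
  rw [show ((2 * N + 1 : ℝ) ^ 2) = (((2 * N + 1) ^ 2 : ℕ) : ℝ) by push_cast; ring,
    ENNReal.ofReal_natCast]
  push_cast
  ring

lemma enorm_bavg_le {X : Type*} (T : (Fin 2 → ℤ) → X → X) (F : X → ℂ) (N : ℕ) (x : X) :
    ‖bavg T F N x‖ₑ ≤ ((2 * N + 1 : ℕ) ^ 2 : ENNReal)⁻¹ * ∑ n ∈ box N, ‖F (T n x)‖ₑ := by
  rw [bavg, enorm_smul, enorm_bavg_const]
  gcongr
  exact enorm_sum_le _ _

lemma bavg_sub {X : Type*} (T : (Fin 2 → ℤ) → X → X) (F g : X → ℂ) (N : ℕ) (x : X) :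
    bavg T (fun x => F x - g x) N x = bavg T F N x - bavg T g N x := by
  simp only [bavg, Finset.sum_sub_distrib, smul_sub]

lemma sq_ne_zero_enn (N : ℕ) : ((2 * N + 1 : ℕ) ^ 2 : ENNReal) ≠ 0 := by
  exact_mod_cast (by positivity : (2 * N + 1) ^ 2 ≠ 0)

lemma sq_ne_top_enn (N : ℕ) : ((2 * N + 1 : ℕ) ^ 2 : ENNReal) ≠ ⊤ :=
  ENNReal.pow_ne_top (ENNReal.natCast_ne_top _)

lemma lintegral_bavg_le {X : Type*} [MeasurableSpace X] (μ : Measure X)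
    (T : (Fin 2 → ℤ) → X → X) (hT : ∀ n, MeasurePreserving (T n) μ μ) (F : X → ℂ)
    (hF : AEStronglyMeasurable F μ) (N : ℕ) :
    ∫⁻ x, ‖bavg T F N x‖ₑ ∂μ ≤ ∫⁻ x, ‖F x‖ₑ ∂μ := by
  have hm : ∀ n, AEMeasurable (fun x => ‖F (T n x)‖ₑ) μ := fun n =>
    (hF.comp_measurePreserving (hT n)).enorm
  have he : ∀ n, ∫⁻ x, ‖F (T n x)‖ₑ ∂μ = ∫⁻ x, ‖F x‖ₑ ∂μ := by
    intro n
    have h1 : AEMeasurable (fun x => ‖F x‖ₑ) (Measure.map (T n) μ) := by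
      rw [(hT n).map_eq]; exact hF.enorm
    have := lintegral_map' h1 (hT n).measurable.aemeasurable
    rw [(hT n).map_eq] at this
    exact this.symm
  calc _ ≤ ∫⁻ x, ((2 * N + 1 : ℕ) ^ 2 : ENNReal)⁻¹ * ∑ n ∈ box N, ‖F (T n x)‖ₑ ∂μ :=
        lintegral_mono fun x => enorm_bavg_le T F N x
    _ = _ := by
        rw [lintegral_const_mul'' _ (Finset.aemeasurable_fun_sum _ fun n _ => hm n),
          lintegral_finsetSum' _ (fun n _ => hm n)]
        simp only [he, Finset.sum_const, card_box, nsmul_eq_mul]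
        rw [← mul_assoc]
        push_cast
        have h0 := sq_ne_zero_enn N
        have ht := sq_ne_top_enn N
        push_cast at h0 ht
        rw [ENNReal.inv_mul_cancel h0 ht, one_mul]

lemma aesm_bavg {X : Type*} [MeasurableSpace X] (μ : Measure X)
    (T : (Fin 2 → ℤ) → X → X) (hT : ∀ n, MeasurePreserving (T n) μ μ) (F : X → ℂ)
    (hF : AEStronglyMeasurable F μ) (N : ℕ) : AEStronglyMeasurable (bavg T F N) μ := by
  unfold bavg
  have h : AEStronglyMeasurable (fun x => ∑ n ∈ box N, F (T n x)) μ :=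
    Finset.aestronglyMeasurable_fun_sum _ fun n _ => hF.comp_measurePreserving (hT n)
  exact h.const_smul (((2 * N + 1 : ℝ) ^ 2)⁻¹)

lemma banach_ae {X : Type*} [MeasurableSpace X] (μ : Measure X)
    (T : (Fin 2 → ℤ) → X → X) (hT : ∀ n, MeasurePreserving (T n) μ μ)
    (hadd : ∀ n m x, T n (T m x) = T (m + n) x)
    (F Q : X → ℂ) (hF : AEStronglyMeasurable F μ) (hQ : AEStronglyMeasurable Q μ)
    (happ : ∀ ε : ENNReal, ε ≠ 0 → ∃ g q : X → ℂ, AEStronglyMeasurable g μ ∧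
      AEStronglyMeasurable q μ ∧ ∫⁻ x, ‖F x - g x‖ₑ ∂μ ≤ ε ∧ ∫⁻ x, ‖Q x - q x‖ₑ ∂μ ≤ ε ∧
      (∀ᵐ x ∂μ, Tendsto (fun N => bavg T g N x) atTop (𝓝 (q x)))) :
    ∀ᵐ x ∂μ, Tendsto (fun N => bavg T F N x) atTop (𝓝 (Q x)) := by
  have key : ∀ m : ℕ, ∀ᵐ x ∂μ, ∀ᶠ N in atTop,
      ‖bavg T F N x - Q x‖ₑ ≤ 3 * ((m : ENNReal) + 1)⁻¹ := by
    intro m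
    set δ : ENNReal := ((m : ENNReal) + 1)⁻¹ with hδ
    have hδ0 : δ ≠ 0 := ENNReal.inv_ne_zero.2 (by finiteness)
    have hδt : δ ≠ ⊤ := ENNReal.inv_ne_top.2 (by simp)
    rw [ae_iff]
    set Bad := {x | ¬ ∀ᶠ N in atTop, ‖bavg T F N x - Q x‖ₑ ≤ 3 * δ} with hBad
    have hb : ∀ ε : ENNReal, ε ≠ 0 → δ * μ Bad ≤ 101 * ε := by
      intro ε hε
      obtain ⟨g, q, hg, hq, hFg, hQq, hconv⟩ := happ ε hε
      set S1 := {x | ∃ N : ℕ, δ * ((2 * N + 1 : ℕ) ^ 2 : ENNReal) ≤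
        ∑ n ∈ box N, ‖F (T n x) - g (T n x)‖ₑ} with hS1
      set S2 := {x | δ ≤ ‖Q x - q x‖ₑ} with hS2
      have hsub : μ Bad ≤ μ (S1 ∪ S2) := by
        refine measure_mono_ae ?_
        filter_upwards [hconv] with x hx hxb
        by_contra hcon
        apply hxb
        have hn1 : x ∉ S1 := fun h => hcon (Or.inl h)
        have hn2 : x ∉ S2 := fun h => hcon (Or.inr h)
        simp only [hS1, hS2, Set.mem_ofPred_eq, not_exists, not_le] at hn1 hn2
        have hev : ∀ᶠ N in atTop, edist (bavg T g N x) (q x) < δ :=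
          hx.eventually (Metric.eball_mem_nhds _ (pos_iff_ne_zero.2 hδ0))
        filter_upwards [hev] with N hN
        have e1 : ‖bavg T (fun x => F x - g x) N x‖ₑ ≤ δ := by
          refine (enorm_bavg_le _ _ _ _).trans ?_
          rw [mul_comm, ← div_eq_mul_inv]
          exact ENNReal.div_le_of_le_mul (hn1 N).le
        have e2 : bavg T F N x - Q x = bavg T (fun x => F x - g x) N x +
            (bavg T g N x - q x) - (Q x - q x) := by
          rw [bavg_sub]; ring
        rw [edist_eq_enorm_sub] at hN
        rw [e2]
        calc _ ≤ ‖bavg T (fun x => F x - g x) N x + (bavg T g N x - q x)‖ₑ + ‖Q x - q x‖ₑ :=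
              enorm_sub_le
          _ ≤ (‖bavg T (fun x => F x - g x) N x‖ₑ + ‖bavg T g N x - q x‖ₑ) + ‖Q x - q x‖ₑ := by
              gcongr
              exact enorm_add_le _ _
          _ ≤ (δ + δ) + δ := by gcongr
          _ = 3 * δ := by ring
      have b1 : δ * μ S1 ≤ 100 * ε :=
        (maximal_full μ T hT hadd (fun x => ‖F x - g x‖ₑ) (hF.sub hg).enorm δ).trans (by gcongr)
      have b2 : δ * μ S2 ≤ ε :=
        (mul_meas_ge_le_lintegral₀ (hQ.sub hq).enorm δ).trans hQq
      calc δ * μ Bad ≤ δ * (μ S1 + μ S2) := by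
            gcongr
            exact hsub.trans (measure_union_le _ _)
        _ = δ * μ S1 + δ * μ S2 := by ring
        _ ≤ 100 * ε + ε := by gcongr
        _ = 101 * ε := by ring
    have hz : δ * μ Bad = 0 := by
      by_contra hne
      by_cases htop : δ * μ Bad = ⊤
      · have := hb 1 one_ne_zero
        rw [htop] at this
        exact absurd (top_le_iff.1 this) (by finiteness)
      have h1 := hb (δ * μ Bad / 202) (by simp [hne])
      have h2 : 101 * (δ * μ Bad / 202) = δ * μ Bad / 2 := by
        rw [div_eq_mul_inv, div_eq_mul_inv, mul_comm (101 : ENNReal), mul_assoc]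
        congr 1
        rw [show (202 : ENNReal) = 2 * 101 by norm_num,
          ENNReal.mul_inv (by simp) (by simp), mul_assoc,
          ENNReal.inv_mul_cancel (by simp) (by finiteness), mul_one]
      rw [h2] at h1
      exact absurd h1 (not_le.2 (ENNReal.half_lt_self hne htop))
    exact (mul_eq_zero.1 hz).resolve_left hδ0
  filter_upwards [ae_all_iff.2 key] with x hx
  rw [EMetric.tendsto_nhds]
  intro ε hε
  obtain ⟨m, hm⟩ := ENNReal.exists_inv_nat_lt (a := ε / 3) (by simp [hε.ne'])
  filter_upwards [hx m] with N hN
  rw [edist_eq_enorm_sub]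
  refine hN.trans_lt ?_
  have : ((m : ENNReal) + 1)⁻¹ < ε / 3 :=
    lt_of_le_of_lt (ENNReal.inv_le_inv.2 le_self_add) hm
  rw [mul_comm]
  exact (ENNReal.lt_div_iff_mul_lt (by simp) (by simp)).1 this

lemma banach_L1 {X : Type*} [MeasurableSpace X] (μ : Measure X)
    (T : (Fin 2 → ℤ) → X → X) (hT : ∀ n, MeasurePreserving (T n) μ μ)
    (F Q : X → ℂ) (hF : AEStronglyMeasurable F μ) (hQ : AEStronglyMeasurable Q μ)
    (happ : ∀ ε : ENNReal, ε ≠ 0 → ∃ g q : X → ℂ, AEStronglyMeasurable g μ ∧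
      AEStronglyMeasurable q μ ∧ ∫⁻ x, ‖F x - g x‖ₑ ∂μ ≤ ε ∧ ∫⁻ x, ‖Q x - q x‖ₑ ∂μ ≤ ε ∧
      Tendsto (fun N => ∫⁻ x, ‖bavg T g N x - q x‖ₑ ∂μ) atTop (𝓝 0)) :
    Tendsto (fun N => ∫⁻ x, ‖bavg T F N x - Q x‖ₑ ∂μ) atTop (𝓝 0) := by
  rw [ENNReal.tendsto_nhds_zero]
  intro ε hε
  have hε3 : ε / 3 ≠ 0 := by simp [hε.ne']
  obtain ⟨g, q, hg, hq, hFg, hQq, hconv⟩ := happ (ε / 3) hε3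
  filter_upwards [ENNReal.tendsto_nhds_zero.1 hconv (ε / 3) (pos_iff_ne_zero.2 hε3)] with N hN
  have hFgm := hF.sub hg
  calc ∫⁻ x, ‖bavg T F N x - Q x‖ₑ ∂μ
      ≤ ∫⁻ x, (‖bavg T (fun x => F x - g x) N x‖ₑ + ‖bavg T g N x - q x‖ₑ) + ‖Q x - q x‖ₑ ∂μ := by
        refine lintegral_mono fun x => ?_
        have e2 : bavg T F N x - Q x = bavg T (fun x => F x - g x) N x +
            (bavg T g N x - q x) - (Q x - q x) := by
          rw [bavg_sub]; ring
        show ‖bavg T F N x - Q x‖ₑ ≤ _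
        rw [e2]
        refine enorm_sub_le.trans ?_
        gcongr
        exact enorm_add_le _ _
    _ = (∫⁻ x, ‖bavg T (fun x => F x - g x) N x‖ₑ ∂μ + ∫⁻ x, ‖bavg T g N x - q x‖ₑ ∂μ)
          + ∫⁻ x, ‖Q x - q x‖ₑ ∂μ := by
        have m1 : AEMeasurable (fun x => ‖Q x - q x‖ₑ) μ := (hQ.sub hq).enorm
        have m2 : AEMeasurable (fun x => ‖bavg T g N x - q x‖ₑ) μ :=
          ((aesm_bavg μ T hT g hg N).sub hq).enorm
        rw [lintegral_add_right' _ m1, lintegral_add_right' _ m2]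
    _ ≤ (ε / 3 + ε / 3) + ε / 3 := by
        gcongr
        exact (lintegral_bavg_le μ T hT _ hFgm N).trans hFg
    _ = ε := ENNReal.add_thirds ε

lemma geom_sum_box (w : ℂ) (hw0 : w ≠ 0) (N : ℕ) :
    (w - 1) * ∑ a ∈ Finset.Icc (-(N : ℤ)) N, w ^ a = w ^ ((N : ℤ) + 1) - w ^ (-(N : ℤ)) := by
  induction N with
  | zero => simp
  | succ N ih =>
    have h1 : Finset.Icc (-((N + 1 : ℕ) : ℤ)) ((N + 1 : ℕ) : ℤ)
        = insert (-((N : ℤ) + 1)) (insert ((N : ℤ) + 1) (Finset.Icc (-(N : ℤ)) N)) := by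
      ext x
      simp only [Finset.mem_Icc, Finset.mem_insert]
      push_cast
      omega
    rw [h1, Finset.sum_insert, Finset.sum_insert, mul_add, mul_add, ih]
    · push_cast
      rw [sub_mul, sub_mul, one_mul, one_mul, ← zpow_one_add₀ hw0, ← zpow_one_add₀ hw0]
      rw [show (1 : ℤ) + -((N : ℤ) + 1) = -N by ring,
        show (1 : ℤ) + ((N : ℤ) + 1) = (N : ℤ) + 1 + 1 by ring]
      ring
    · simp
    · simp only [Finset.mem_Icc, Finset.mem_insert]
      omega

lemma geom_avg_bound (w : ℂ) (hw : ‖w‖ = 1) (hw1 : w ≠ 1) (N : ℕ) :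
    ‖∑ a ∈ Finset.Icc (-(N : ℤ)) N, w ^ a‖ ≤ 2 / ‖w - 1‖ := by
  have hw0 : w ≠ 0 := by
    rintro rfl; simp at hw
  have hp : 0 < ‖w - 1‖ := norm_pos_iff.2 (sub_ne_zero.2 hw1)
  rw [le_div_iff₀ hp, mul_comm, ← norm_mul, geom_sum_box w hw0 N]
  refine (norm_sub_le _ _).trans ?_
  rw [norm_zpow, norm_zpow, hw]
  norm_num

lemma geom_trivial_bound (w : ℂ) (hw : ‖w‖ = 1) (N : ℕ) :
    ‖∑ a ∈ Finset.Icc (-(N : ℤ)) N, w ^ a‖ ≤ 2 * N + 1 := by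
  refine (norm_sum_le _ _).trans ?_
  simp only [norm_zpow, hw, _root_.one_zpow, Finset.sum_const, Int.card_Icc, nsmul_eq_mul, mul_one]
  have : ((N : ℤ) + 1 - -(N : ℤ)).toNat = 2 * N + 1 := by omega
  rw [this]
  push_cast
  exact le_rfl

lemma box_sum_prod (w : Fin 2 → ℂ) (N : ℕ) :
    ∑ n ∈ box N, ∏ i, w i ^ n i = ∏ i, ∑ a ∈ Finset.Icc (-(N : ℤ)) N, w i ^ a := by
  rw [box_eq_pi, Finset.prod_univ_sum]

lemma char_avg_tendsto (w : Fin 2 → ℂ) (hw : ∀ i, ‖w i‖ = 1) (i₀ : Fin 2) (hi : w i₀ ≠ 1) :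
    Tendsto (fun N : ℕ => ((2 * N + 1 : ℝ) ^ 2)⁻¹ • ∑ n ∈ box N, ∏ i, w i ^ n i) atTop (𝓝 0) := by
  have hlim : Tendsto (fun N : ℕ => (2 / ‖w i₀ - 1‖) * ((2 * N + 1 : ℝ))⁻¹) atTop (𝓝 0) := by
    rw [← mul_zero (2 / ‖w i₀ - 1‖)]
    refine Tendsto.const_mul _ (tendsto_inv_atTop_zero.comp ?_)
    refine tendsto_atTop_add_const_right _ _ ?_
    exact tendsto_natCast_atTop_atTop.const_mul_atTop (by norm_num)
  refine squeeze_zero_norm (fun N => ?_) hlim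
  have hpos : (0 : ℝ) < 2 * N + 1 := by positivity
  have hprod : ‖∏ i, ∑ a ∈ Finset.Icc (-(N : ℤ)) N, w i ^ a‖ ≤
      (2 / ‖w i₀ - 1‖) * (2 * N + 1) := by
    rw [norm_prod, Fin.prod_univ_two]
    have hb := geom_avg_bound (w i₀) (hw i₀) hi N
    have h0 := geom_trivial_bound (w 0) (hw 0) N
    have h1 := geom_trivial_bound (w 1) (hw 1) N
    fin_cases i₀
    · simp only [Fin.zero_eta] at hb ⊢
      gcongr
    · simp only [Fin.mk_one] at hb ⊢
      rw [mul_comm]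
      gcongr
  rw [box_sum_prod, norm_smul, Real.norm_of_nonneg (by positivity)]
  calc _ ≤ ((2 * N + 1 : ℝ) ^ 2)⁻¹ * ((2 / ‖w i₀ - 1‖) * (2 * N + 1)) := by gcongr
    _ = _ := by field_simp

abbrev VT := UnitAddTorus (Fin 2)

instance instProbVT : IsProbabilityMeasure (volume : Measure VT) := by
  constructor
  rw [volume_pi, Measure.pi_univ]
  simp

lemma mFourier_apply_add (k : Fin 2 → ℤ) (x y : VT) :
    UnitAddTorus.mFourier k (x + y) = UnitAddTorus.mFourier k x * UnitAddTorus.mFourier k y := by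
  simp only [UnitAddTorus.mFourier, ContinuousMap.coe_mk, ← Finset.prod_mul_distrib, Pi.add_apply,
    fourier_apply, smul_add, AddCircle.toCircle_add, Circle.coe_mul]

lemma mFourier_apply_norm (k : Fin 2 → ℤ) (x : VT) : ‖UnitAddTorus.mFourier k x‖ = 1 := by
  simp only [UnitAddTorus.mFourier, ContinuousMap.coe_mk, norm_prod, fourier_apply,
    Circle.norm_coe, Finset.prod_const_one]

lemma weyl_torus (c : (Fin 2 → ℤ) →+ VT)
    (hc : ∀ k : Fin 2 → ℤ, k ≠ 0 → ∃ n, UnitAddTorus.mFourier k (c n) ≠ 1) (φ : C(VT, ℂ)) :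
    Tendsto (fun N : ℕ => ((2 * N + 1 : ℝ) ^ 2)⁻¹ • ∑ n ∈ box N, φ (c n)) atTop
      (𝓝 (∫ v, φ v)) := by
  have hintg : ∀ φ : C(VT, ℂ), Integrable (fun v => φ v) (volume : Measure VT) := fun φ =>
    φ.continuous.integrable_of_hasCompactSupport (HasCompactSupport.of_compactSpace _)
  -- characters
  have hchar : ∀ k : Fin 2 → ℤ,
      Tendsto (fun N : ℕ => ((2 * N + 1 : ℝ) ^ 2)⁻¹ • ∑ n ∈ box N, UnitAddTorus.mFourier k (c n))
      atTop (𝓝 (∫ v, UnitAddTorus.mFourier k v)) := by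
    intro k
    by_cases hk : k = 0
    · subst hk
      rw [UnitAddTorus.mFourier_zero]
      simp only [ContinuousMap.one_apply, Finset.sum_const, card_box, integral_const,
        probReal_univ, one_smul]
      refine tendsto_const_nhds.congr fun N => ?_
      rw [nsmul_eq_mul, mul_one, Complex.real_smul]
      push_cast
      rw [inv_mul_cancel₀]
      have : (2 * (N : ℂ) + 1) ≠ 0 := by exact_mod_cast (by positivity : (2 * N + 1) ≠ 0)
      positivity
    · obtain ⟨n₀, hn₀⟩ := hc k hk
      have h0 : ∫ v : VT, UnitAddTorus.mFourier k v = 0 := by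
        have h1 : ∫ v : VT, UnitAddTorus.mFourier k (v + c n₀)
            = ∫ v : VT, UnitAddTorus.mFourier k v :=
          integral_add_right_eq_self (fun v : VT => UnitAddTorus.mFourier k v) (c n₀)
        simp only [mFourier_apply_add, integral_mul_const] at h1
        have h2 : (∫ v : VT, UnitAddTorus.mFourier k v) *
            (UnitAddTorus.mFourier k (c n₀) - 1) = 0 := by
          rw [mul_sub, h1]; ring
        exact (mul_eq_zero.1 h2).resolve_right (sub_ne_zero.2 hn₀)
      rw [h0]
      let χ : Multiplicative (Fin 2 → ℤ) →* ℂˣ := MonoidHom.toHomUnits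
        { toFun := fun n => UnitAddTorus.mFourier k (c n.toAdd)
          map_one' := by
            simp only [toAdd_one, map_zero]
            simp [UnitAddTorus.mFourier]
          map_mul' := fun a b => by
            simp only [toAdd_mul, map_add, mFourier_apply_add] }
      have hχ : ∀ n, UnitAddTorus.mFourier k (c n) = ∏ i,
          (UnitAddTorus.mFourier k (c (Pi.single i 1))) ^ n i := by
        intro n
        have h1 : ((χ (Multiplicative.ofAdd n) : ℂˣ) : ℂ) = UnitAddTorus.mFourier k (c n) := rfl
        have h2 : ∀ i, ((χ (Multiplicative.ofAdd (Pi.single i 1)) : ℂˣ) : ℂ)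
          = UnitAddTorus.mFourier k (c (Pi.single i 1)) := fun i => rfl
        have h3 : Multiplicative.ofAdd n =
            ∏ i, (Multiplicative.ofAdd (Pi.single i 1 : Fin 2 → ℤ)) ^ n i := by
          rw [Fin.prod_univ_two, ← ofAdd_zsmul, ← ofAdd_zsmul, ← ofAdd_add]
          congr 1
          ext i
          fin_cases i <;> simp
        rw [← h1, h3, map_prod]
        simp only [map_zpow, Units.coe_prod, Units.val_zpow_eq_zpow_val, h2]
      have hex : ∃ i, UnitAddTorus.mFourier k (c (Pi.single i 1)) ≠ 1 := by
        by_contra hcon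
        push Not at hcon
        apply hn₀
        rw [hχ]
        simp [hcon]
      obtain ⟨i, hi⟩ := hex
      have := char_avg_tendsto (fun i => UnitAddTorus.mFourier k (c (Pi.single i 1)))
        (fun i => mFourier_apply_norm _ _) i hi
      refine this.congr fun N => ?_
      congr 1
      exact Finset.sum_congr rfl fun n _ => (hχ n).symm
  -- span
  have hspan : ∀ ψ ∈ Submodule.span ℂ (Set.range (UnitAddTorus.mFourier (d := Fin 2))),
      Tendsto (fun N : ℕ => ((2 * N + 1 : ℝ) ^ 2)⁻¹ • ∑ n ∈ box N, ψ (c n)) atTop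
      (𝓝 (∫ v, ψ v)) := by
    intro ψ hψ
    induction hψ using Submodule.span_induction with
    | mem x hx =>
      obtain ⟨k, rfl⟩ := hx
      exact hchar k
    | zero => simp
    | add x y _ _ hx hy =>
      simp only [ContinuousMap.add_apply]
      rw [integral_add (hintg x) (hintg y)]
      refine (hx.add hy).congr fun N => ?_
      rw [Finset.sum_add_distrib, smul_add]
    | smul a x _ hx =>
      simp only [ContinuousMap.smul_apply, smul_eq_mul]
      rw [integral_const_mul]
      refine (hx.const_mul a).congr fun N => ?_
      rw [← Finset.mul_sum, mul_smul_comm]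
  have hmem : φ ∈ closure
      (Submodule.span ℂ (Set.range (UnitAddTorus.mFourier (d := Fin 2))) : Set C(VT, ℂ)) := by
    have := UnitAddTorus.span_mFourier_closure_eq_top (d := Fin 2)
    rw [← Submodule.topologicalClosure_coe, this]
    trivial
  rw [Metric.tendsto_atTop]
  intro ε hε
  obtain ⟨ψ, hψ, hd⟩ := Metric.mem_closure_iff.1 hmem (ε / 3) (by positivity)
  obtain ⟨N₀, hN₀⟩ := Metric.tendsto_atTop.1 (hspan ψ hψ) (ε / 3) (by positivity)
  refine ⟨N₀, fun N hN => ?_⟩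
  have hpt : ∀ v, ‖φ v - ψ v‖ ≤ ε / 3 := fun v => by
    rw [← dist_eq_norm]; exact (ContinuousMap.dist_apply_le_dist v).trans hd.le
  have e1 : dist (((2 * N + 1 : ℝ) ^ 2)⁻¹ • ∑ n ∈ box N, φ (c n))
      (((2 * N + 1 : ℝ) ^ 2)⁻¹ • ∑ n ∈ box N, ψ (c n)) ≤ ε / 3 := by
    rw [dist_eq_norm, ← smul_sub, ← Finset.sum_sub_distrib, norm_smul,
      Real.norm_of_nonneg (by positivity)]
    have : ‖∑ n ∈ box N, (φ (c n) - ψ (c n))‖ ≤ (2 * N + 1 : ℝ) ^ 2 * (ε / 3) := by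
      refine (norm_sum_le_of_le _ fun n _ => hpt (c n)).trans ?_
      rw [Finset.sum_const, card_box, nsmul_eq_mul]
      push_cast
      exact le_rfl
    calc _ ≤ ((2 * N + 1 : ℝ) ^ 2)⁻¹ * ((2 * N + 1 : ℝ) ^ 2 * (ε / 3)) := by gcongr
      _ = ε / 3 := by field_simp
  have e2 : dist (∫ v, ψ v) (∫ v, φ v) ≤ ε / 3 := by
    rw [dist_comm, dist_eq_norm, ← integral_sub (hintg φ) (hintg ψ)]
    refine (norm_integral_le_of_norm_le_const (Eventually.of_forall hpt)).trans ?_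
    simp
  calc _ ≤ _ := dist_triangle4 _ (((2 * N + 1 : ℝ) ^ 2)⁻¹ • ∑ n ∈ box N, ψ (c n)) (∫ v, ψ v) _
    _ < ε / 3 + ε / 3 + ε / 3 := by
      have := hN₀ N hN
      linarith
    _ = ε := by ring

instance instHaarVT2 : (volume : Measure (VT × VT)).IsAddHaarMeasure :=
  Measure.prod.instIsAddHaarMeasure (volume : Measure VT) (volume : Measure VT)

instance instMAddTwoVT : MeasurableAdd₂ (VT × VT) := ContinuousAdd.measurableMul₂

instance instMAddVT2 : MeasurableAdd (VT × VT) := ContinuousAdd.measurableAdd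

instance instRegVT2 : (volume : Measure (VT × VT)).Regular := by
  have : TopologicalSpace.PseudoMetrizableSpace (VT × VT) := inferInstance
  exact Measure.Regular.of_sigmaCompactSpace_of_isLocallyFiniteMeasure _

instance instRegVT : (volume : Measure VT).Regular :=
  Measure.Regular.of_sigmaCompactSpace_of_isLocallyFiniteMeasure _

instance instHaarVT : (volume : Measure VT).IsAddHaarMeasure := by
  unfold VT UnitAddTorus
  infer_instance


lemma torus_mp (ι : VT →+ VT × VT) (hι : Continuous ι) :
    MeasurePreserving (fun p : (VT × VT) × VT => p.1 + ι p.2)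
      ((volume : Measure (VT × VT)).prod (volume : Measure VT)) (volume : Measure (VT × VT)) := by
  have h1 : MeasurePreserving (fun p : VT × (VT × VT) => (p.1, p.2 + ι p.1))
      ((volume : Measure VT).prod (volume : Measure (VT × VT)))
      ((volume : Measure VT).prod (volume : Measure (VT × VT))) := by
    refine (MeasurePreserving.id _).skew_product (g := fun v x => x + ι v) ?_ ?_
    · exact (measurable_snd.add (hι.measurable.comp measurable_fst))
    · exact Eventually.of_forall fun v => map_add_right_eq_self _ _
  exact (measurePreserving_snd.comp h1).comp Measure.measurePreserving_swap

/-- Fibre average. -/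
def fibAvg (ι : VT →+ VT × VT) (F : VT × VT → ℂ) (x : VT × VT) : ℂ := ∫ v, F (x + ι v)

lemma torus_ergodic (ι : VT →+ VT × VT) (hι : Continuous ι) (c : (Fin 2 → ℤ) →+ VT)
    (hc : ∀ k : Fin 2 → ℤ, k ≠ 0 → ∃ n, UnitAddTorus.mFourier k (c n) ≠ 1)
    (F : VT × VT → ℂ) (hF : Integrable F) :
    Integrable (fibAvg ι F) ∧
    (∀ᵐ x, Tendsto (fun N => bavg (fun n x => x + ι (c n)) F N x) atTop (𝓝 (fibAvg ι F x))) ∧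
    Tendsto (fun N => ∫⁻ x, ‖bavg (fun n x => x + ι (c n)) F N x - fibAvg ι F x‖ₑ) atTop
      (𝓝 0) := by
  have hmp := torus_mp ι hι
  have hprod : ∀ G : VT × VT → ℂ, Integrable G →
      Integrable (fun p : (VT × VT) × VT => G (p.1 + ι p.2))
        ((volume : Measure (VT × VT)).prod (volume : Measure VT)) := fun G hG =>
    hmp.integrable_comp_of_integrable hG
  have hfib : ∀ G : VT × VT → ℂ, Integrable G → Integrable (fibAvg ι G) := fun G hG =>
    (hprod G hG).integral_prod_left
  have hcontr : ∀ G : VT × VT → ℂ, Integrable G →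
      ∫⁻ x, ‖fibAvg ι G x‖ₑ ≤ ∫⁻ x, ‖G x‖ₑ := by
    intro G hG
    calc ∫⁻ x, ‖fibAvg ι G x‖ₑ ≤ ∫⁻ x, ∫⁻ v, ‖G (x + ι v)‖ₑ :=
          lintegral_mono fun x => enorm_integral_le_lintegral_enorm _
      _ = ∫⁻ p : (VT × VT) × VT, ‖G (p.1 + ι p.2)‖ₑ ∂(volume.prod volume) := by
          rw [lintegral_prod _ (hprod G hG).1.enorm]
      _ = ∫⁻ x, ‖G x‖ₑ := by
          have h1 : AEMeasurable (fun x => ‖G x‖ₑ) (Measure.map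
              (fun p : (VT × VT) × VT => p.1 + ι p.2) (volume.prod volume)) := by
            rw [hmp.map_eq]; exact hG.1.enorm
          have := lintegral_map' h1 hmp.measurable.aemeasurable
          rw [hmp.map_eq] at this
          exact this.symm
  have hT : ∀ n, MeasurePreserving (fun x : VT × VT => x + ι (c n)) volume volume := fun n =>
    measurePreserving_add_right _ _
  have hadd : ∀ (n m : Fin 2 → ℤ) (x : VT × VT), x + ι (c m) + ι (c n) = x + ι (c (m + n)) := by
    intro n m x
    rw [map_add, map_add, add_assoc]
  have happ : ∀ ε : ENNReal, ε ≠ 0 → ∃ g q : VT × VT → ℂ, AEStronglyMeasurable g volume ∧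
      AEStronglyMeasurable q volume ∧ ∫⁻ x, ‖F x - g x‖ₑ ≤ ε ∧ ∫⁻ x, ‖fibAvg ι F x - q x‖ₑ ≤ ε ∧
      (∀ᵐ x, Tendsto (fun N => bavg (fun n x => x + ι (c n)) g N x) atTop (𝓝 (q x))) ∧
      Tendsto (fun N => ∫⁻ x, ‖bavg (fun n x => x + ι (c n)) g N x - q x‖ₑ) atTop (𝓝 0) := by
    intro ε hε
    obtain ⟨g, -, hFg, hgc, hgi⟩ := hF.exists_hasCompactSupport_lintegral_sub_le hε
    have hconv : ∀ x, Tendsto (fun N => bavg (fun n x => x + ι (c n)) g N x) atTop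
        (𝓝 (fibAvg ι g x)) := by
      intro x
      exact weyl_torus c hc ⟨fun v => g (x + ι v), by fun_prop⟩
    refine ⟨g, fibAvg ι g, hgi.1, (hfib g hgi).1, hFg, ?_, Eventually.of_forall hconv, ?_⟩
    · refine le_trans ?_ ((hcontr (fun x => F x - g x) (hF.sub hgi)).trans hFg)
      refine lintegral_mono_ae ?_
      filter_upwards [(hprod F hF).prod_right_ae, (hprod g hgi).prod_right_ae] with x hx1 hx2
      simp only [fibAvg]
      rw [integral_sub hx1 hx2]
    · obtain ⟨B, hB⟩ : ∃ B : ℝ, ∀ x, ‖g x‖ ≤ B := by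
        obtain ⟨B, hB⟩ := isCompact_univ.exists_bound_of_continuousOn hgc.continuousOn
        exact ⟨B, fun x => hB x trivial⟩
      have hBe : ∀ x, ‖g x‖ₑ ≤ ENNReal.ofReal B := fun x => by
        rw [← ofReal_norm]; exact ENNReal.ofReal_le_ofReal (hB x)
      have := tendsto_lintegral_of_dominated_convergence'
        (μ := (volume : Measure (VT × VT)))
        (F := fun N x => ‖bavg (fun n x => x + ι (c n)) g N x - fibAvg ι g x‖ₑ)
        (f := fun _ => 0) (fun _ => ENNReal.ofReal B + ENNReal.ofReal B) ?_ ?_ ?_ ?_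
      · simpa using this
      · intro N
        exact ((aesm_bavg _ _ hT g hgi.1 N).sub (hfib g hgi).1).enorm
      · intro N
        refine Eventually.of_forall fun x => ?_
        refine enorm_sub_le.trans ?_
        show _ ≤ ENNReal.ofReal B + ENNReal.ofReal B
        gcongr
        · refine (enorm_bavg_le _ _ _ _).trans ?_
          calc _ ≤ ((2 * N + 1 : ℕ) ^ 2 : ENNReal)⁻¹ * ∑ n ∈ box N, ENNReal.ofReal B := by
                gcongr
                exact hBe _
            _ = ENNReal.ofReal B := by
                rw [Finset.sum_const, card_box, nsmul_eq_mul, ← mul_assoc]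
                have h0 := sq_ne_zero_enn N
                have ht := sq_ne_top_enn N
                push_cast at h0 ht ⊢
                rw [ENNReal.inv_mul_cancel h0 ht, one_mul]
        · refine (enorm_integral_le_lintegral_enorm _).trans ?_
          refine (lintegral_mono (fun v => hBe _)).trans ?_
          simp
      · simp
      · refine Eventually.of_forall fun x => ?_
        have h1 := ((hconv x).sub_const (fibAvg ι g x)).enorm
        simpa using h1
  refine ⟨hfib F hF, ?_, ?_⟩
  · refine banach_ae volume _ hT hadd F _ hF.1 (hfib F hF).1 fun ε hε => ?_
    obtain ⟨g, q, h1, h2, h3, h4, h5, -⟩ := happ ε hε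
    exact ⟨g, q, h1, h2, h3, h4, h5⟩
  · refine banach_L1 volume _ hT F _ hF.1 (hfib F hF).1 fun ε hε => ?_
    obtain ⟨g, q, h1, h2, h3, h4, -, h5⟩ := happ ε hε
    exact ⟨g, q, h1, h2, h3, h4, h5⟩

/-- Projection to the torus. -/
def projT : (Fin 2 → ℝ) →+ VT where
  toFun τ := fun i => (τ i : UnitAddCircle)
  map_zero' := by ext i; simp
  map_add' a b := by ext i; simp

/-- Measurable section of the projection to the torus. -/
def secT (v : VT) : Fin 2 → ℝ := fun i => (AddCircle.equivIoc 1 0 (v i) : ℝ)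

lemma proj_sec (v : VT) : projT (secT v) = v := by
  ext i
  exact AddCircle.coe_equivIoc

lemma proj_eq_iff {a b : Fin 2 → ℝ} (hab : projT a = projT b) : ∃ n, a = b + iv n := by
  have h1 : ∀ i, ∃ n : ℤ, a i = b i + n := by
    intro i
    have h2 : ((a i : ℝ) : UnitAddCircle) = (b i : UnitAddCircle) := congrFun hab i
    have h3 : ((a i - b i : ℝ) : UnitAddCircle) = 0 := by
      rw [AddCircle.coe_sub, h2, sub_self]
    obtain ⟨n, hn⟩ := (AddCircle.coe_eq_zero_iff (1 : ℝ)).1 h3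
    refine ⟨n, ?_⟩
    simp only [zsmul_eq_mul, mul_one] at hn
    linarith
  choose n hn using h1
  exact ⟨n, funext fun i => by simp [iv, hn i]⟩

lemma proj_iv (n : Fin 2 → ℤ) : projT (iv n) = 0 := by
  ext i
  refine (AddCircle.coe_eq_zero_iff (1 : ℝ)).2 ⟨n i, ?_⟩
  simp [iv]

lemma sec_mp : MeasurePreserving secT volume
    (volume.restrict (Set.pi Set.univ fun _ : Fin 2 => Set.Ioc (0 : ℝ) (0 + 1))) := by
  have h1 : MeasurePreserving (fun x : UnitAddCircle => (AddCircle.equivIoc 1 0 x : ℝ)) volume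
      (volume.restrict (Set.Ioc (0 : ℝ) (0 + 1))) := by
    have h2 : MeasurePreserving (Subtype.val : Set.Ioc (0 : ℝ) (0 + 1) → ℝ)
        (Measure.comap Subtype.val volume) (volume.restrict (Set.Ioc (0 : ℝ) (0 + 1))) :=
      ⟨measurable_subtype_coe, map_comap_subtype_coe measurableSet_Ioc _⟩
    exact h2.comp (AddCircle.measurePreserving_equivIoc 1)
  have h3 := measurePreserving_pi (ι := Fin 2) (fun _ => (volume : Measure UnitAddCircle))
    (fun _ => volume.restrict (Set.Ioc (0 : ℝ) (0 + 1))) (fun _ => h1)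
  rw [← Measure.restrict_pi_pi] at h3
  exact h3

lemma secT_inj : Function.Injective secT := fun a b hab => by
  rw [← proj_sec a, ← proj_sec b, hab]

lemma secM_map (M : Matrix (Fin 2) (Fin 2) ℝ) (hM : IsUnit M.det) :
    Measure.map (fun v => M.mulVec (secT v)) volume
      = (volume (cell M))⁻¹ • volume.restrict (cell M) := by
  have hM0 : M.det ≠ 0 := hM.ne_zero
  have hinj : Function.Injective (fun v : Fin 2 → ℝ => M.mulVec v) :=
    Matrix.mulVec_injective_iff_isUnit.2 ((Matrix.isUnit_iff_isUnit_det _).2 hM)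
  have hcont : Continuous (fun v : Fin 2 → ℝ => M.mulVec v) := by fun_prop
  have hemb : MeasurableEmbedding (fun v : Fin 2 → ℝ => M.mulVec v) :=
    hcont.measurableEmbedding hinj
  have hpre : (fun v : Fin 2 → ℝ => M.mulVec v) ⁻¹' (cell M)
      = Set.pi Set.univ fun _ : Fin 2 => Set.Ico (0 : ℝ) 1 := by
    ext v
    simp only [cell, Set.mem_preimage, Set.mem_ofPred_eq, Set.mem_univ_pi]
    constructor
    · rintro ⟨t, ht, hv⟩
      rwa [hinj hv]
    · exact fun hv => ⟨v, hv, rfl⟩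
  have hae : (volume : Measure (Fin 2 → ℝ)).restrict
        (Set.pi Set.univ fun _ : Fin 2 => Set.Ioc (0 : ℝ) (0 + 1))
      = volume.restrict (Set.pi Set.univ fun _ : Fin 2 => Set.Ico (0 : ℝ) 1) := by
    rw [zero_add]
    refine Measure.restrict_congr_set ?_
    exact (Measure.univ_pi_Ioc_ae_eq_Icc (f := fun _ : Fin 2 => (0 : ℝ)) (g := fun _ => 1)).trans
      (Measure.univ_pi_Ico_ae_eq_Icc (f := fun _ : Fin 2 => (0 : ℝ)) (g := fun _ => 1)).symm
  have hmap : Measure.map (fun v => M.mulVec (secT v)) volume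
      = ENNReal.ofReal |M.det⁻¹| • volume.restrict (cell M) := by
    have h1 : Measure.map (fun v => M.mulVec (secT v)) volume
        = Measure.map (fun v : Fin 2 → ℝ => M.mulVec v) (Measure.map secT volume) :=
      (Measure.map_map hcont.measurable sec_mp.measurable).symm
    rw [h1, sec_mp.map_eq, hae, ← hpre, ← hemb.restrict_map]
    have h2 : Measure.map (fun v : Fin 2 → ℝ => M.mulVec v) volume
        = ENNReal.ofReal |M.det⁻¹| • volume := Real.map_matrix_volume_pi_eq_smul_volume_pi hM0
    rw [h2, Measure.restrict_smul]
  rw [hmap]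
  congr 1
  have h1 : (Measure.map (fun v => M.mulVec (secT v)) volume) Set.univ = 1 := by
    have hmeas : Measurable (fun v => M.mulVec (secT v)) := hcont.measurable.comp sec_mp.measurable
    rw [Measure.map_apply hmeas MeasurableSet.univ]
    simp
  rw [hmap] at h1
  simp only [Measure.smul_apply, Measure.restrict_apply_univ, smul_eq_mul] at h1
  exact ENNReal.eq_inv_of_mul_eq_one_left h1

lemma secM_emb (M : Matrix (Fin 2) (Fin 2) ℝ) (hM : IsUnit M.det) :
    MeasurableEmbedding (fun v => M.mulVec (secT v)) := by
  have hinj : Function.Injective (fun v : Fin 2 → ℝ => M.mulVec v) :=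
    Matrix.mulVec_injective_iff_isUnit.2 ((Matrix.isUnit_iff_isUnit_det _).2 hM)
  have hcont : Continuous (fun v : Fin 2 → ℝ => M.mulVec v) := by fun_prop
  exact (hcont.measurable.comp sec_mp.measurable).measurableEmbedding (hinj.comp secT_inj)

lemma average_cell (M : Matrix (Fin 2) (Fin 2) ℝ) (hM : IsUnit M.det) (g : (Fin 2 → ℝ) → ℝ) :
    ⨍ x in cell M, g x = ∫ v, g (M.mulVec (secT v)) := by
  rw [← (secM_emb M hM).integral_map, secM_map M hM, average]
  simp

lemma mFourier_proj (k : Fin 2 → ℤ) (τ : Fin 2 → ℝ) :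
    UnitAddTorus.mFourier k (projT τ)
      = Complex.exp (2 * π * Complex.I * ((iv k ⬝ᵥ τ : ℝ) : ℂ)) := by
  have h1 : ∀ i, fourier (k i) ((τ i : ℝ) : UnitAddCircle)
      = Complex.exp (2 * π * Complex.I * (k i * τ i)) := by
    intro i
    rw [fourier_coe_apply]
    congr 1
    push_cast
    ring
  show ∏ i, fourier (k i) ((τ i : ℝ) : UnitAddCircle) = _
  simp only [h1, ← Complex.exp_sum, dotProduct, iv]
  congr 1
  push_cast
  rw [Finset.mul_sum]

lemma mulVec_inv_cancel (M : Matrix (Fin 2) (Fin 2) ℝ) (hM : IsUnit M.det) (x : Fin 2 → ℝ) :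
    M.mulVec (M⁻¹.mulVec x) = x := by
  rw [Matrix.mulVec_mulVec, Matrix.mul_nonsing_inv _ hM, Matrix.one_mulVec]

lemma nonres (Aj Aoth : Matrix (Fin 2) (Fin 2) ℝ) (hAj : IsUnit Aj.det)
    (hinc : ∀ k m : Fin 2 → ℤ, (Aoth⁻¹)ᵀ.mulVec (iv k) = (Aj⁻¹)ᵀ.mulVec (iv m) → k = 0)
    (k : Fin 2 → ℤ) (hk : k ≠ 0) :
    ∃ n, UnitAddTorus.mFourier k (projT ((Aoth⁻¹ * Aj).mulVec (iv n))) ≠ 1 := by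
  by_contra hcon
  push Not at hcon
  have h1 : ∀ i, ∃ m : ℤ, ((Aoth⁻¹ * Aj)ᵀ.mulVec (iv k)) i = m := by
    intro i
    have h2 := hcon (Pi.single i 1)
    rw [mFourier_proj, Complex.exp_eq_one_iff] at h2
    obtain ⟨m, hm⟩ := h2
    refine ⟨m, ?_⟩
    have h3 : ((iv k ⬝ᵥ (Aoth⁻¹ * Aj).mulVec (iv (Pi.single i 1)) : ℝ) : ℂ) = m := by
      have h4 : (2 * π * Complex.I : ℂ) ≠ 0 := Complex.two_pi_I_ne_zero
      apply mul_left_cancel₀ h4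
      rw [hm]; ring
    have h5 : iv k ⬝ᵥ (Aoth⁻¹ * Aj).mulVec (iv (Pi.single i 1)) = m := by exact_mod_cast h3
    have h6 : iv (Pi.single i 1) = Pi.single i (1 : ℝ) := by
      ext l
      by_cases hl : l = i
      · subst hl; simp [iv]
      · simp [iv, hl]
    rw [h6, Matrix.dotProduct_mulVec, dotProduct_single, mul_one, ← Matrix.mulVec_transpose] at h5
    exact h5
  choose m hm using h1
  apply hk
  refine hinc k m ?_
  have h7 : (Aoth⁻¹ * Aj)ᵀ.mulVec (iv k) = iv m := funext hm
  rw [← h7, Matrix.mulVec_mulVec, Matrix.transpose_mul, ← Matrix.mul_assoc,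
    ← Matrix.transpose_mul, Matrix.mul_nonsing_inv _ hAj, Matrix.transpose_one, Matrix.one_mul]

lemma torus_integral_shift (G : VT → ℝ) (α : VT) : ∫ v, G (v + α) = ∫ v, G v :=
  integral_add_right_eq_self G α

lemma torus_integral_sign (G : VT → ℝ) (ε : ℤ) (hε : ε = 1 ∨ ε = -1) :
    ∫ v, G (ε • v) = ∫ v, G v := by
  rcases hε with rfl | rfl
  · simp
  · simp only [neg_smul, one_smul]
    exact integral_neg_eq_self G volume

/-- The function on the torus attached to `h`. -/
def torF (AM Aoth : Matrix (Fin 2) (Fin 2) ℝ) (h : (Fin 2 → ℝ) → (Fin 2 → ℝ) → ℝ)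
    (x : VT × VT) : ℝ := h (AM.mulVec (secT x.1)) (Aoth.mulVec (secT x.2))

lemma torF_proj (AM Aoth : Matrix (Fin 2) (Fin 2) ℝ) (h : (Fin 2 → ℝ) → (Fin 2 → ℝ) → ℝ)
    (hper : ∀ (x y : Fin 2 → ℝ), ∀ rM ∈ lat AM, ∀ r ∈ lat Aoth,
      h (x + rM) (y + r) = h x y) (a b : Fin 2 → ℝ) :
    h (AM.mulVec a) (Aoth.mulVec b) = torF AM Aoth h (projT a, projT b) := by
  obtain ⟨n, hn⟩ := proj_eq_iff (proj_sec (projT a)).symm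
  obtain ⟨m, hm⟩ := proj_eq_iff (proj_sec (projT b)).symm
  unfold torF
  conv_lhs => rw [hn, hm, Matrix.mulVec_add, Matrix.mulVec_add]
  exact hper _ _ _ ⟨n, rfl⟩ _ ⟨m, rfl⟩

section core
variable (Aj Aoth Dj AM : Matrix (Fin 2) (Fin 2) ℝ) (ε : ℤ)

lemma image_cell (M L : Matrix (Fin 2) (Fin 2) ℝ) :
    (fun v => M.mulVec v) '' cell L = cell (M * L) := by
  ext x
  simp only [cell, Set.mem_image, Set.mem_ofPred_eq]
  constructor
  · rintro ⟨_, ⟨t, ht, rfl⟩, rfl⟩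
    exact ⟨t, ht, by rw [Matrix.mulVec_mulVec]⟩
  · rintro ⟨t, ht, rfl⟩
    exact ⟨_, ⟨t, ht, rfl⟩, by rw [Matrix.mulVec_mulVec]⟩

lemma D_mul_AM (hAoth : IsUnit Aoth.det) (hAM : IsUnit AM.det)
    (hε : ε = 1 ∨ ε = -1) (hDj : Dj = 1 - Aoth * Aj⁻¹)
    (hAMinv : AM⁻¹ = (ε : ℝ) • (Aoth⁻¹ - Aj⁻¹)) : Dj * AM = (ε : ℝ) • Aoth := by
  have h1 : Dj = (ε : ℝ) • (Aoth * AM⁻¹) := by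
    rw [hAMinv, Matrix.mul_smul, smul_smul, Matrix.mul_sub, Matrix.mul_nonsing_inv _ hAoth, hDj]
    rcases hε with rfl | rfl <;> simp
  rw [h1, Matrix.smul_mul, Matrix.mul_assoc, Matrix.nonsing_inv_mul _ hAM, Matrix.mul_one]

lemma proj_smul_int (ε : ℤ) (a : Fin 2 → ℝ) : projT ((ε : ℝ) • a) = ε • projT a := by
  rw [← map_zsmul]
  congr 1
  ext i
  simp

lemma ident (hAj : IsUnit Aj.det) (hAoth : IsUnit Aoth.det) (hAM : IsUnit AM.det)
    (hDjinv : IsUnit Dj.det)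
    (hε : ε = 1 ∨ ε = -1) (hDj : Dj = 1 - Aoth * Aj⁻¹)
    (hAMinv : AM⁻¹ = (ε : ℝ) • (Aoth⁻¹ - Aj⁻¹))
    (h : (Fin 2 → ℝ) → (Fin 2 → ℝ) → ℝ)
    (hper : ∀ (x y : Fin 2 → ℝ), ∀ rM ∈ lat AM, ∀ r ∈ lat Aoth,
      h (x + rM) (y + r) = h x y) (a b : Fin 2 → ℝ) :
    (⨍ ξ in (fun v => Aj⁻¹.mulVec v) '' cell AM,
          h (Aj.mulVec ξ + AM.mulVec a) ((Aj - Aoth).mulVec ξ + Aoth.mulVec b))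
        = ∫ v, torF AM Aoth h (projT a + ε • v, projT b + v) ∧
    (⨍ x in cell AM, h x (Dj.mulVec (x - AM.mulVec a) + Aoth.mulVec b))
        = ∫ v, torF AM Aoth h (projT a + ε • v, projT b + v) ∧
    (⨍ y in cell Aoth, h (Dj⁻¹.mulVec (y - Aoth.mulVec b) + AM.mulVec a) y)
        = ∫ v, torF AM Aoth h (projT a + ε • v, projT b + v) := by
  have hDA := D_mul_AM Aj Aoth Dj AM ε hAoth hAM hε hDj hAMinv
  have hεε : ε * ε = 1 := by rcases hε with rfl | rfl <;> rfl
  have hεεR : (ε : ℝ) * ε = 1 := by exact_mod_cast hεε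
  have hDA' : Dj⁻¹ * Aoth = (ε : ℝ) • AM := by
    have h1 : Aoth = (ε : ℝ) • (Dj * AM) := by rw [hDA, smul_smul, hεεR, one_smul]
    conv_lhs => rw [h1]
    rw [Matrix.mul_smul, ← Matrix.mul_assoc, Matrix.nonsing_inv_mul _ hDjinv, Matrix.one_mul]
  have hbase : ∫ v, torF AM Aoth h (projT a + v, projT b + ε • v)
      = ∫ v, torF AM Aoth h (projT a + ε • v, projT b + v) := by
    rw [← torus_integral_sign (fun v => torF AM Aoth h (projT a + v, projT b + ε • v)) ε hε]
    simp only [smul_smul, hεε, one_smul]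
  refine ⟨?_, ?_, ?_⟩
  · rw [image_cell, average_cell, ← hbase]
    · congr 1
      ext v
      have e1 : Aj.mulVec ((Aj⁻¹ * AM).mulVec (secT v)) + AM.mulVec a
          = AM.mulVec (a + secT v) := by
        rw [Matrix.mulVec_mulVec, ← Matrix.mul_assoc, Matrix.mul_nonsing_inv _ hAj,
          Matrix.one_mul, Matrix.mulVec_add, add_comm]
      have e2 : (Aj - Aoth).mulVec ((Aj⁻¹ * AM).mulVec (secT v)) + Aoth.mulVec b
          = Aoth.mulVec (b + (ε : ℝ) • secT v) := by
        rw [Matrix.mulVec_mulVec, ← Matrix.mul_assoc, Matrix.sub_mul,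
          Matrix.mul_nonsing_inv _ hAj, ← hDj, hDA, Matrix.mulVec_add, Matrix.mulVec_smul,
          Matrix.smul_mulVec, add_comm]
      rw [e1, e2, torF_proj AM Aoth h hper, map_add, map_add, proj_smul_int, proj_sec]
    · rw [Matrix.det_mul]
      exact (Matrix.isUnit_nonsing_inv_det _ hAj).mul hAM
  · rw [average_cell _ hAM, ← hbase]
    rw [← torus_integral_shift (fun v => torF AM Aoth h (projT a + v, projT b + ε • v)) (-projT a)]
    congr 1
    ext v
    have e2 : Dj.mulVec (AM.mulVec (secT v) - AM.mulVec a) + Aoth.mulVec b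
        = Aoth.mulVec (b + (ε : ℝ) • (secT v - a)) := by
      rw [← Matrix.mulVec_sub, Matrix.mulVec_mulVec, hDA, Matrix.mulVec_add, Matrix.mulVec_smul,
          Matrix.smul_mulVec, add_comm]
    rw [e2, torF_proj AM Aoth h hper, map_add, proj_smul_int, map_sub, proj_sec]
    congr 2
    abel
  · rw [average_cell _ hAoth]
    rw [← torus_integral_shift (fun v => torF AM Aoth h (projT a + ε • v, projT b + v)) (-projT b)]
    congr 1
    ext v
    have e2 : Dj⁻¹.mulVec (Aoth.mulVec (secT v) - Aoth.mulVec b) + AM.mulVec a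
        = AM.mulVec (a + (ε : ℝ) • (secT v - b)) := by
      rw [← Matrix.mulVec_sub, Matrix.mulVec_mulVec, hDA', Matrix.mulVec_add, Matrix.mulVec_smul,
          Matrix.smul_mulVec, add_comm]
    rw [e2, torF_proj AM Aoth h hper, map_add, proj_smul_int, map_sub, proj_sec]
    congr 2
    abel

end core

lemma cell_subset_compact (M : Matrix (Fin 2) (Fin 2) ℝ) :
    ∃ K : Set (Fin 2 → ℝ), IsCompact K ∧ cell M ⊆ K := by
  have hcont : Continuous (fun v : Fin 2 → ℝ => M.mulVec v) := by fun_prop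
  refine ⟨(fun v => M.mulVec v) '' Set.Icc 0 1, isCompact_Icc.image hcont, ?_⟩
  rintro x ⟨t, ht, rfl⟩
  exact ⟨t, ⟨fun i => (ht i).1, fun i => (ht i).2.le⟩, rfl⟩

lemma vol_cell_ne_top (M : Matrix (Fin 2) (Fin 2) ℝ) : volume (cell M) ≠ ⊤ := by
  obtain ⟨K, hK, hs⟩ := cell_subset_compact M
  exact ((measure_mono hs).trans_lt hK.measure_lt_top).ne

lemma vol_cell_ne_zero (M : Matrix (Fin 2) (Fin 2) ℝ) (hM : IsUnit M.det) :
    volume (cell M) ≠ 0 := by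
  intro h0
  have h1 := secM_map M hM
  rw [Measure.restrict_eq_zero.2 h0, smul_zero] at h1
  have h2 := Measure.map_apply (μ := (volume : Measure VT)) (secM_emb M hM).measurable
    MeasurableSet.univ
  rw [h1] at h2
  simp at h2

/-- The parametrization of the product cell by the product torus. -/
def parS (AM Aoth : Matrix (Fin 2) (Fin 2) ℝ) (x : VT × VT) : (Fin 2 → ℝ) × (Fin 2 → ℝ) :=
  (AM.mulVec (secT x.1), Aoth.mulVec (secT x.2))

lemma parS_emb (AM Aoth : Matrix (Fin 2) (Fin 2) ℝ) (hAM : IsUnit AM.det)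
    (hAoth : IsUnit Aoth.det) : MeasurableEmbedding (parS AM Aoth) :=
  (secM_emb AM hAM).prodMap (secM_emb Aoth hAoth)

lemma parS_map (AM Aoth : Matrix (Fin 2) (Fin 2) ℝ) (hAM : IsUnit AM.det)
    (hAoth : IsUnit Aoth.det) :
    ∃ C : ENNReal, C ≠ 0 ∧ C ≠ ⊤ ∧
      volume.restrict (cell AM ×ˢ cell Aoth) = C • Measure.map (parS AM Aoth) volume := by
  refine ⟨volume (cell AM) * volume (cell Aoth),
    mul_ne_zero (vol_cell_ne_zero _ hAM) (vol_cell_ne_zero _ hAoth),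
    ENNReal.mul_ne_top (vol_cell_ne_top _) (vol_cell_ne_top _), ?_⟩
  have h1 : Measure.map (parS AM Aoth) volume
      = (Measure.map (fun v => AM.mulVec (secT v)) volume).prod
        (Measure.map (fun v => Aoth.mulVec (secT v)) volume) :=
    (Measure.map_prod_map _ _ (secM_emb AM hAM).measurable (secM_emb Aoth hAoth).measurable).symm
  have e : ∀ M : Matrix (Fin 2) (Fin 2) ℝ, IsUnit M.det → volume.restrict (cell M)
      = volume (cell M) • Measure.map (fun v => M.mulVec (secT v)) volume := by
    intro M hM
    rw [secM_map M hM, smul_smul, ENNReal.mul_inv_cancel (vol_cell_ne_zero M hM)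
      (vol_cell_ne_top M), one_smul]
  rw [h1, Measure.volume_eq_prod, ← Measure.prod_restrict, e AM hAM, e Aoth hAoth]
  have : SFinite (Measure.map (fun v => AM.mulVec (secT v)) (volume : Measure VT)) := inferInstance
  rw [Measure.prod_smul_left, Measure.prod_smul_right, smul_smul]

section core2
variable (Aj Aoth Dj AM : Matrix (Fin 2) (Fin 2) ℝ) (ε : ℤ)

/-- The diagonal-type homomorphism. -/
def iotaE (ε : ℤ) : VT →+ VT × VT where
  toFun v := (ε • v, v)
  map_zero' := by simp
  map_add' a b := by simp

/-- The rotation vectors. -/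
def cHom (C : Matrix (Fin 2) (Fin 2) ℝ) : (Fin 2 → ℤ) →+ VT where
  toFun n := projT (C.mulVec (iv n))
  map_zero' := by
    have : iv 0 = 0 := by ext i; simp [iv]
    rw [this]; simp
  map_add' a b := by
    have : iv (a + b) = iv a + iv b := by ext i; simp [iv]
    rw [this, Matrix.mulVec_add, map_add]

lemma core_shift (hAoth : IsUnit Aoth.det) (hAj : IsUnit Aj.det) (hAM : IsUnit AM.det)
    (hε : ε = 1 ∨ ε = -1)
    (hAMinv : AM⁻¹ = (ε : ℝ) • (Aoth⁻¹ - Aj⁻¹))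
    (h : (Fin 2 → ℝ) → (Fin 2 → ℝ) → ℝ)
    (hper : ∀ (x y : Fin 2 → ℝ), ∀ rM ∈ lat AM, ∀ r ∈ lat Aoth,
      h (x + rM) (y + r) = h x y) (x : VT × VT) (n : Fin 2 → ℤ) :
    h ((parS AM Aoth x).1 + Aj.mulVec (iv n)) ((parS AM Aoth x).2 + Aj.mulVec (iv n))
      = torF AM Aoth h (x + iotaE ε (cHom (Aoth⁻¹ * Aj) n)) := by
  have e1 : (parS AM Aoth x).1 + Aj.mulVec (iv n)
      = AM.mulVec (secT x.1 + (ε : ℝ) • ((Aoth⁻¹ * Aj).mulVec (iv n) - iv n)) := by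
    have h2 : (ε : ℝ) • ((Aoth⁻¹ * Aj).mulVec (iv n) - iv n)
        = AM⁻¹.mulVec (Aj.mulVec (iv n)) := by
      rw [hAMinv, Matrix.smul_mulVec, Matrix.mulVec_mulVec, Matrix.sub_mul,
        Matrix.nonsing_inv_mul _ hAj, Matrix.sub_mulVec, Matrix.one_mulVec]
    rw [h2, Matrix.mulVec_add, mulVec_inv_cancel _ hAM]
    rfl
  have e2 : (parS AM Aoth x).2 + Aj.mulVec (iv n)
      = Aoth.mulVec (secT x.2 + (Aoth⁻¹ * Aj).mulVec (iv n)) := by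
    rw [Matrix.mulVec_add, ← Matrix.mulVec_mulVec, mulVec_inv_cancel _ hAoth]
    rfl
  rw [e1, e2, torF_proj AM Aoth h hper]
  congr 1
  rw [map_add, map_add, proj_sec, proj_sec, proj_smul_int, map_sub, proj_iv, sub_zero]
  rfl

lemma core_thm (hAj : IsUnit Aj.det) (hAoth : IsUnit Aoth.det) (hAM : IsUnit AM.det)
    (hDjinv : IsUnit Dj.det)
    (hε : ε = 1 ∨ ε = -1) (hDj : Dj = 1 - Aoth * Aj⁻¹)
    (hAMinv : AM⁻¹ = (ε : ℝ) • (Aoth⁻¹ - Aj⁻¹))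
    (hinc : ∀ k m : Fin 2 → ℤ, (Aoth⁻¹)ᵀ.mulVec (iv k) = (Aj⁻¹)ᵀ.mulVec (iv m) → k = 0)
    (h : (Fin 2 → ℝ) → (Fin 2 → ℝ) → ℝ)
    (hloc : LocallyIntegrable (fun p : (Fin 2 → ℝ) × (Fin 2 → ℝ) => h p.1 p.2) volume)
    (hper : ∀ (x y : Fin 2 → ℝ), ∀ rM ∈ lat AM, ∀ r ∈ lat Aoth,
      h (x + rM) (y + r) = h x y) :
    (∀ᵐ ω ∂(volume.restrict ((cell AM) ×ˢ (cell Aoth))),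
      Tendsto
        (fun N : ℕ => ((2 * N + 1 : ℝ) ^ 2)⁻¹ *
          ∑ n ∈ box N, h (ω.1 + Aj.mulVec (iv n)) (ω.2 + Aj.mulVec (iv n)))
        atTop
        (𝓝 (⨍ ξ in (fun v => Aj⁻¹.mulVec v) '' cell AM,
          h (Aj.mulVec ξ + ω.1) ((Aj - Aoth).mulVec ξ + ω.2)))) ∧
    Tendsto
      (fun N : ℕ => ∫ ω in (cell AM) ×ˢ (cell Aoth),
        |((2 * N + 1 : ℝ) ^ 2)⁻¹ *
            (∑ n ∈ box N, h (ω.1 + Aj.mulVec (iv n)) (ω.2 + Aj.mulVec (iv n))) -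
          ⨍ ξ in (fun v => Aj⁻¹.mulVec v) '' cell AM,
            h (Aj.mulVec ξ + ω.1) ((Aj - Aoth).mulVec ξ + ω.2)|)
      atTop (𝓝 0) ∧
    (∀ ωM ωo : Fin 2 → ℝ,
      (⨍ ξ in (fun v => Aj⁻¹.mulVec v) '' cell AM,
          h (Aj.mulVec ξ + ωM) ((Aj - Aoth).mulVec ξ + ωo)) =
        (⨍ x in cell AM, h x (Dj.mulVec (x - ωM) + ωo)) ∧
      (⨍ ξ in (fun v => Aj⁻¹.mulVec v) '' cell AM,
          h (Aj.mulVec ξ + ωM) ((Aj - Aoth).mulVec ξ + ωo)) =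
        (⨍ y in cell Aoth, h (Dj⁻¹.mulVec (y - ωo) + ωM) y)) := by
  have hident := ident Aj Aoth Dj AM ε hAj hAoth hAM hDjinv hε hDj hAMinv h hper
  obtain ⟨C, hC0, hCt, hC⟩ := parS_map AM Aoth hAM hAoth
  have hS := parS_emb AM Aoth hAM hAoth
  set ι := iotaE ε with hιdef
  set c := cHom (Aoth⁻¹ * Aj) with hcdef
  have hι : Continuous ι := by
    show Continuous (fun v : VT => (ε • v, v))
    fun_prop
  have hc : ∀ k : Fin 2 → ℤ, k ≠ 0 → ∃ n, UnitAddTorus.mFourier k (c n) ≠ 1 :=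
    fun k hk => nonres Aj Aoth hAj hinc k hk
  have hFR : Integrable (torF AM Aoth h) := by
    obtain ⟨K1, hK1, hs1⟩ := cell_subset_compact AM
    obtain ⟨K2, hK2, hs2⟩ := cell_subset_compact Aoth
    have h1 : IntegrableOn (fun p : (Fin 2 → ℝ) × (Fin 2 → ℝ) => h p.1 p.2)
        (cell AM ×ˢ cell Aoth) volume :=
      (hloc.integrableOn_isCompact (hK1.prod hK2)).mono_set (Set.prod_mono hs1 hs2)
    rw [IntegrableOn, hC, integrable_smul_measure hC0 hCt, hS.integrable_map_iff] at h1
    exact h1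
  have hF : Integrable (fun x => (torF AM Aoth h x : ℂ)) := hFR.ofReal
  obtain ⟨hI, hae, hL1⟩ := torus_ergodic ι hι c hc _ hF
  -- pointwise identification
  have hlim : ∀ x : VT × VT, (⨍ ξ in (fun v => Aj⁻¹.mulVec v) '' cell AM,
      h (Aj.mulVec ξ + (parS AM Aoth x).1) ((Aj - Aoth).mulVec ξ + (parS AM Aoth x).2))
      = ∫ v, torF AM Aoth h (x + ι v) := by
    intro x
    have := (hident (secT x.1) (secT x.2)).1
    rw [proj_sec, proj_sec] at this
    exact this
  have hfib : ∀ x, fibAvg ι (fun x => (torF AM Aoth h x : ℂ)) x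
      = ((∫ v, torF AM Aoth h (x + ι v) : ℝ) : ℂ) := fun x => integral_ofReal
  have hbav : ∀ N x, bavg (fun n x => x + ι (c n)) (fun x => (torF AM Aoth h x : ℂ)) N x
      = ((((2 * N + 1 : ℝ) ^ 2)⁻¹ * ∑ n ∈ box N, h ((parS AM Aoth x).1 + Aj.mulVec (iv n))
          ((parS AM Aoth x).2 + Aj.mulVec (iv n)) : ℝ) : ℂ) := by
    intro N x
    simp only [core_shift Aj Aoth AM ε hAoth hAj hAM hε hAMinv h hper x]
    rw [bavg, Complex.ofReal_mul, Complex.ofReal_sum, Complex.real_smul]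
  refine ⟨?_, ?_, ?_⟩
  · rw [hC]
    refine Measure.ae_smul_measure ?_ C
    rw [hS.ae_map_iff]
    filter_upwards [hae] with x hx
    rw [hlim x]
    rw [hfib x] at hx
    simp only [hbav] at hx
    exact (Complex.continuous_re.tendsto _).comp hx
  · have h2 : ∀ N : ℕ, (∫ ω in (cell AM) ×ˢ (cell Aoth),
        |((2 * N + 1 : ℝ) ^ 2)⁻¹ *
            (∑ n ∈ box N, h (ω.1 + Aj.mulVec (iv n)) (ω.2 + Aj.mulVec (iv n))) -
          ⨍ ξ in (fun v => Aj⁻¹.mulVec v) '' cell AM,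
            h (Aj.mulVec ξ + ω.1) ((Aj - Aoth).mulVec ξ + ω.2)|)
        = C.toReal * (∫⁻ x, ‖bavg (fun n x => x + ι (c n)) (fun x => (torF AM Aoth h x : ℂ)) N x
            - fibAvg ι (fun x => (torF AM Aoth h x : ℂ)) x‖ₑ).toReal := by
      intro N
      rw [hC, integral_smul_measure, hS.integral_map, smul_eq_mul]
      congr 1
      rw [← integral_norm_eq_lintegral_enorm]
      · congr 1
        ext x
        rw [hlim, hfib, hbav, ← Complex.ofReal_sub, Complex.norm_real, Real.norm_eq_abs]
      · exact (aesm_bavg volume _ (fun n => measurePreserving_add_right _ _) _ hF.1 N).sub hI.1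
    simp only [h2]
    have h3 := (ENNReal.tendsto_toReal ENNReal.zero_ne_top).comp hL1
    have h4 := h3.const_mul C.toReal
    simpa using h4
  · intro ωM ωo
    obtain ⟨i1, i2, i3⟩ := hident (AM⁻¹.mulVec ωM) (Aoth⁻¹.mulVec ωo)
    rw [mulVec_inv_cancel _ hAM, mulVec_inv_cancel _ hAoth] at i1 i2 i3
    exact ⟨i1.trans i2.symm, i1.trans i3.symm⟩

end core2

lemma det_Rot (φ : ℝ) : (Rot φ).det = 1 := by
  rw [Rot, Matrix.det_fin_two_of]
  nlinarith [Real.sin_sq_add_cos_sq φ]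

lemma isUnit_smul_Rot (r φ : ℝ) (hr : r ≠ 0) (A : Matrix (Fin 2) (Fin 2) ℝ) (hA : IsUnit A.det) :
    IsUnit (r • (Rot φ * A)).det := by
  rw [Matrix.det_smul, Matrix.det_mul, det_Rot, one_mul]
  exact (isUnit_iff_ne_zero.2 (pow_ne_zero _ hr)).mul hA

lemma two_pi_ne : (2 * π : ℝ) ≠ 0 := by positivity

lemma recip_det (M : Matrix (Fin 2) (Fin 2) ℝ) (hM : IsUnit M.det) : IsUnit (recip M).det := by
  rw [recip, Matrix.det_smul, Matrix.det_transpose]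
  exact (isUnit_iff_ne_zero.2 (pow_ne_zero _ two_pi_ne)).mul (Matrix.isUnit_nonsing_inv_det _ hM)

lemma recip_inv (M : Matrix (Fin 2) (Fin 2) ℝ) (hM : IsUnit M.det) :
    (recip M)⁻¹ = (2 * π)⁻¹ • Mᵀ := by
  apply Matrix.inv_eq_left_inv
  rw [recip, Matrix.smul_mul, Matrix.mul_smul, smul_smul, inv_mul_cancel₀ two_pi_ne, one_smul,
    ← Matrix.transpose_mul, Matrix.nonsing_inv_mul _ hM, Matrix.transpose_one]

lemma inc_aux (Aj Aoth : Matrix (Fin 2) (Fin 2) ℝ) (hAoth : IsUnit Aoth.det)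
    (hinc : ∀ G1 ∈ lat (recip Aoth), ∀ G2 ∈ lat (recip Aj), G1 + G2 = 0 → G1 = 0)
    (k m : Fin 2 → ℤ) (hkm : (Aoth⁻¹)ᵀ.mulVec (iv k) = (Aj⁻¹)ᵀ.mulVec (iv m)) : k = 0 := by
  have hneg : iv (-m) = -iv m := by ext i; simp [iv]
  have h1 := hinc _ ⟨k, rfl⟩ _ ⟨-m, rfl⟩ (by
    rw [recip, recip, hneg, Matrix.mulVec_neg, Matrix.smul_mulVec, Matrix.smul_mulVec, hkm,
      add_neg_cancel])
  have h2 : (recip Aoth)⁻¹.mulVec ((recip Aoth).mulVec (iv k)) = 0 := by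
    rw [h1, Matrix.mulVec_zero]
  rw [Matrix.mulVec_mulVec, Matrix.nonsing_inv_mul _ (recip_det _ hAoth), Matrix.one_mulVec] at h2
  ext i
  have := congrFun h2 i
  simpa [iv] using this

/-- Proposition: pointwise and mean ergodic theorem in two variables. -/
theorem double_ergodic_theorem (θ q : ℝ) (hq : 0 < q)
    (A A1 A2 B1 B2 BM AM : Matrix (Fin 2) (Fin 2) ℝ)
    (hA : IsUnit A.det)
    (hA1 : A1 = (Real.sqrt q)⁻¹ • (Rot (-(θ / 2)) * A))
    (hA2 : A2 = Real.sqrt q • (Rot (θ / 2) * A))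
    (hB1 : B1 = recip A1) (hB2 : B2 = recip A2)
    (hBM : BM = B1 - B2) (hBMinv : IsUnit BM.det)
    (hAM : AM = recip BM)
    (hinc : Incommensurate B1 B2) (hincstar : Incommensurate A1 A2)
    (j : Fin 2) (Aj Aoth Dj : Matrix (Fin 2) (Fin 2) ℝ)
    (hAj : Aj = ![A1, A2] j) (hAoth : Aoth = ![A1, A2] (1 - j))
    (hDj : Dj = 1 - Aoth * Aj⁻¹) (hDjinv : IsUnit Dj.det)
    (h : (Fin 2 → ℝ) → (Fin 2 → ℝ) → ℝ)
    (hloc : LocallyIntegrable (fun p : (Fin 2 → ℝ) × (Fin 2 → ℝ) => h p.1 p.2) volume)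
    (hper : ∀ (x y : Fin 2 → ℝ), ∀ rM ∈ lat AM, ∀ r ∈ lat Aoth,
      h (x + rM) (y + r) = h x y) :
    -- almost sure convergence on Γ_𝓜 × Γ_{3−j}
    (∀ᵐ ω ∂(volume.restrict ((cell AM) ×ˢ (cell Aoth))),
      Tendsto
        (fun N : ℕ => ((2 * N + 1 : ℝ) ^ 2)⁻¹ *
          ∑ n ∈ box N, h (ω.1 + Aj.mulVec (iv n)) (ω.2 + Aj.mulVec (iv n)))
        atTop
        (𝓝 (⨍ ξ in (fun v => Aj⁻¹.mulVec v) '' cell AM,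
          h (Aj.mulVec ξ + ω.1) ((Aj - Aoth).mulVec ξ + ω.2)))) ∧
    -- L¹(Γ_𝓜 × Γ_{3−j}) convergence
    Tendsto
      (fun N : ℕ => ∫ ω in (cell AM) ×ˢ (cell Aoth),
        |((2 * N + 1 : ℝ) ^ 2)⁻¹ *
            (∑ n ∈ box N, h (ω.1 + Aj.mulVec (iv n)) (ω.2 + Aj.mulVec (iv n))) -
          ⨍ ξ in (fun v => Aj⁻¹.mulVec v) '' cell AM,
            h (Aj.mulVec ξ + ω.1) ((Aj - Aoth).mulVec ξ + ω.2)|)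
      atTop (𝓝 0) ∧
    -- identification of the limit
    (∀ ωM ωo : Fin 2 → ℝ,
      (⨍ ξ in (fun v => Aj⁻¹.mulVec v) '' cell AM,
          h (Aj.mulVec ξ + ωM) ((Aj - Aoth).mulVec ξ + ωo)) =
        (⨍ x in cell AM, h x (Dj.mulVec (x - ωM) + ωo)) ∧
      (⨍ ξ in (fun v => Aj⁻¹.mulVec v) '' cell AM,
          h (Aj.mulVec ξ + ωM) ((Aj - Aoth).mulVec ξ + ωo)) =
        (⨍ y in cell Aoth, h (Dj⁻¹.mulVec (y - ωo) + ωM) y)) := by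
  have hs : Real.sqrt q ≠ 0 := (Real.sqrt_pos.2 hq).ne'
  have u1 : IsUnit A1.det := hA1 ▸ isUnit_smul_Rot _ _ (inv_ne_zero hs) A hA
  have u2 : IsUnit A2.det := hA2 ▸ isUnit_smul_Rot _ _ hs A hA
  have uM : IsUnit AM.det := hAM ▸ recip_det BM hBMinv
  have hAMinv : AM⁻¹ = A1⁻¹ - A2⁻¹ := by
    rw [hAM, recip_inv BM hBMinv, hBM, hB1, hB2, recip, recip, ← smul_sub, Matrix.transpose_smul,
      smul_smul, inv_mul_cancel₀ two_pi_ne, one_smul, Matrix.transpose_sub,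
      Matrix.transpose_transpose, Matrix.transpose_transpose]
  have hj : j = 0 ∨ j = 1 := by fin_cases j <;> simp
  subst hB1 hB2
  rcases hj with rfl | rfl
  · have e1 : Aj = A1 := hAj
    have e2 : Aoth = A2 := hAoth
    clear hAj hAoth
    subst e1 e2
    refine core_thm Aj Aoth Dj AM (-1) u1 u2 uM hDjinv (Or.inr rfl) hDj ?_ ?_ h hloc hper
    · rw [hAMinv]; simp
    · exact inc_aux Aj Aoth u2 fun G1 h1 G2 h2 h12 =>
        (hinc G2 h2 G1 h1 (by rw [add_comm]; exact h12)).2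
  · have e1 : Aj = A2 := hAj
    have e2 : Aoth = A1 := hAoth
    clear hAj hAoth
    subst e1 e2
    refine core_thm Aj Aoth Dj AM 1 u2 u1 uM hDjinv (Or.inl rfl) hDj ?_ ?_ h hloc hper
    · rw [hAMinv]; simp
    · exact inc_aux Aj Aoth u1 fun G1 h1 G2 h2 h12 => (hinc G1 h1 G2 h2 h12).1

end
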